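/- For every real α > −1 and every z ∈ ℂ∖[−1,1]: exp( ((z²−1)^{1/2}/(2π)) · ∫_{−1}^1 (α·log|x|)/(√(1−x²)·(z−x)) dx ) = exp( (α/2)·Log( z/(z+(z²−1)^{1/2}) ) ), where Log is the principal logarithm (the quantity z/(z+(z²−1)^{1/2}) avoids (−∞,0] for z ∈ ℂ∖[−1,1]). -/

import Mathlib

open MeasureTheory Real

/-- `(z²-1)^{1/2} = z √(1 - z⁻²)`, the branch analytic on `ℂ∖[-1,1]` which is positive
for real `z > 1`. -/
noncomputable def sqBranch (z : ℂ) : ℂ := z * (1 - z⁻¹ ^ 2) ^ ((1 : ℂ) / 2)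

/-!
Under the Joukowsky map `z = (w + w⁻¹) / 2`, with `w = z - (z² - 1)^{1/2}` in the unit disc, and
`x = Re ζ` with `|ζ| = 1`, the Szegő integral of `log |x|` becomes the Herglotz transform at `w` of
`ζ ↦ log |Re ζ|`. Since `2 |Re ζ| = |ζ - i| |ζ + i|` on the circle, the Poisson integral of this
function is `log |(1 + w²) / 2|`, so the transform is `Log ((1 + w²) / 2)`; and
`(1 + w²) / 2 = z / (z + (z² - 1)^{1/2})`.
-/

/-- The Herglotz transform of the function `g` on the circle of radius `R` about the origin: the
holomorphic function on the disc whose real part is the Poisson integral of `g`, normalised to be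
real at the origin. -/
noncomputable def herglotzTransform (g : ℂ → ℝ) (R : ℝ) (w : ℂ) : ℂ :=
  circleAverage (fun ζ ↦ herglotzRieszKernel 0 w ζ • (g ζ : ℂ)) 0 R

section Herglotz

variable {g : ℂ → ℝ} {R : ℝ}

lemma herglotzTransform_zero (hR : R ≠ 0) : herglotzTransform g R 0 = circleAverage g 0 R := by
  have h_kernel : Set.EqOn (fun ζ ↦ herglotzRieszKernel 0 0 ζ • (g ζ : ℂ)) (fun ζ ↦ (g ζ : ℂ))
      (Metric.sphere 0 |R|) := fun ζ hζ ↦ by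
    have hζ0 : ζ ≠ 0 := Metric.ne_of_mem_sphere hζ (abs_ne_zero.mpr hR)
    simp [herglotzRieszKernel_def, hζ0]
  rw [herglotzTransform, circleAverage_congr_sphere h_kernel]
  simp [circleAverage_def, intervalIntegral.integral_ofReal]

theorem herglotzTransform_eq_of_re_eq {F : ℂ → ℂ} (hg : CircleIntegrable g 0 R)
    (hF : DifferentiableOn ℂ F (Metric.ball 0 R))
    (hre : ∀ w ∈ Metric.ball 0 R,
      circleAverage ((Complex.re ∘ herglotzRieszKernel 0 w) • g) 0 R = (F w).re)
    (him : (F 0).im = 0) {w : ℂ} (hw : w ∈ Metric.ball 0 R) :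
    herglotzTransform g R w = F w := by
  have hR : 0 < R := Metric.pos_of_mem_ball hw
  have hg_ofReal : CircleIntegrable (fun ζ ↦ (g ζ : ℂ)) 0 R := ⟨hg.1.ofReal, hg.2.ofReal⟩
  have h_analytic : AnalyticOnNhd ℂ (fun w ↦ herglotzTransform g R w - F w) (Metric.ball 0 R) :=
    (analyticOnNhd_circleAverage_herglotzRieszKernel_smul hg_ofReal).sub
      (hF.analyticOnNhd Metric.isOpen_ball)
  have h_re_zero : ∀ w ∈ Metric.ball 0 R, (herglotzTransform g R w - F w).re = 0 := fun w hw ↦ by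
    rw [Complex.sub_re, herglotzTransform, re_circleAverage_herglotzRieszKernel_smul hg hw,
      hre w hw, sub_self]
  obtain ⟨c, hc⟩ := h_analytic.eq_re_add_const_mul_I_of_re_eq_const h_re_zero Metric.isOpen_ball
    (Metric.isConnected_ball hR)
  have hc_zero : c = 0 := by
    have h_im := congrArg Complex.im (hc 0 (Metric.mem_ball_self hR))
    simpa [herglotzTransform_zero hR.ne', him] using h_im.symm
  simpa [hc_zero, sub_eq_zero] using hc w hw

lemma two_mul_herglotzTransform_of_comp_inv (hg : CircleIntegrable g 0 1)
    (hg_inv : ∀ ζ : ℂ, ‖ζ‖ = 1 → g ζ⁻¹ = g ζ) {w : ℂ} (hw : w ∈ Metric.ball 0 1) :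
    2 * herglotzTransform g 1 w = circleAverage
      (fun ζ ↦ (herglotzRieszKernel 0 w ζ + herglotzRieszKernel 0 w ζ⁻¹) • (g ζ : ℂ)) 0 1 := by
  have h_kernel : ContinuousOn (herglotzRieszKernel 0 w) (Metric.sphere 0 |1|) :=
    continuousOn_herglotzRieszKernel_sphere hw
  have h_kernel_inv : ContinuousOn (fun ζ ↦ herglotzRieszKernel 0 w ζ⁻¹) (Metric.sphere 0 |1|) :=
    h_kernel.comp (continuousOn_inv₀.mono fun ζ hζ ↦ Metric.ne_of_mem_sphere hζ (by simp))
      fun ζ hζ ↦ by simpa using hζ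
  have hg_ofReal : CircleIntegrable (fun ζ ↦ (g ζ : ℂ)) 0 1 := ⟨hg.1.ofReal, hg.2.ofReal⟩
  have h_transform_inv : herglotzTransform g 1 w =
      circleAverage (fun ζ ↦ herglotzRieszKernel 0 w ζ⁻¹ • (g ζ : ℂ)) 0 1 := by
    rw [herglotzTransform, ← circleAverage_zero_one_congr_inv]
    refine circleAverage_congr_sphere fun ζ hζ ↦ ?_
    simp only [hg_inv ζ (by simpa using hζ)]
  calc 2 * herglotzTransform g 1 w
    _ = circleAverage (fun ζ ↦ herglotzRieszKernel 0 w ζ • (g ζ : ℂ)) 0 1 +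
        circleAverage (fun ζ ↦ herglotzRieszKernel 0 w ζ⁻¹ • (g ζ : ℂ)) 0 1 := by
      rw [two_mul, ← h_transform_inv, herglotzTransform]
    _ = _ := by
      simp only [add_smul]
      exact (circleAverage_add (hg_ofReal.continuousOn_smul h_kernel)
        (hg_ofReal.continuousOn_smul h_kernel_inv)).symm

end Herglotz

section LogAbsRe

lemma circleIntegrable_log_abs_re : CircleIntegrable (fun ζ ↦ log |ζ.re|) 0 1 := by
  have h : IntervalIntegrable (log ∘ cos) volume 0 (2 * π) := intervalIntegrable_log_cos
  simpa [CircleIntegrable, circleMap, Complex.exp_ofReal_mul_I_re, Function.comp_def] using h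

lemma norm_sub_I_mul_norm_add_I {ζ : ℂ} (hζ : ‖ζ‖ = 1) :
    ‖ζ - Complex.I‖ * ‖ζ + Complex.I‖ = 2 * |ζ.re| := by
  have h_inv : ζ * (starRingEnd ℂ) ζ = 1 := by simp [Complex.mul_conj', hζ]
  calc ‖ζ - Complex.I‖ * ‖ζ + Complex.I‖
    _ = ‖ζ * (ζ + (starRingEnd ℂ) ζ)‖ := by
      rw [← norm_mul]
      congr 1
      linear_combination -h_inv - Complex.I_sq
    _ = 2 * |ζ.re| := by simp [Complex.add_conj, hζ]

-- At `ζ = ±I` both sides vanish, by the convention `log 0 = 0`.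
lemma log_abs_re_of_norm_eq_one {ζ : ℂ} (hζ : ‖ζ‖ = 1) :
    log |ζ.re| = log ‖ζ - Complex.I‖ + log ‖ζ - -Complex.I‖ - log 2 := by
  have h_two : ‖Complex.I + Complex.I‖ = 2 := by simp [← two_mul]
  rcases eq_or_ne ζ Complex.I with rfl | h_sub
  · simp [h_two]
  rcases eq_or_ne ζ (-Complex.I) with rfl | h_add
  · rw [← neg_add', norm_neg, h_two]
    simp
  have h_sub_norm : ‖ζ - Complex.I‖ ≠ 0 := norm_ne_zero_iff.mpr (sub_ne_zero.mpr h_sub)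
  have h_add_norm : ‖ζ + Complex.I‖ ≠ 0 :=
    norm_ne_zero_iff.mpr fun h ↦ h_add (eq_neg_of_add_eq_zero_left h)
  have h_re : |ζ.re| = ‖ζ - Complex.I‖ * ‖ζ + Complex.I‖ / 2 := by
    rw [norm_sub_I_mul_norm_add_I hζ]
    ring
  rw [h_re, log_div (mul_ne_zero h_sub_norm h_add_norm) two_ne_zero,
    log_mul h_sub_norm h_add_norm, sub_neg_eq_add]

lemma circleAverage_re_herglotzRieszKernel_smul_log_abs_re {w : ℂ} (hw : w ∈ Metric.ball 0 1) :
    circleAverage ((Complex.re ∘ herglotzRieszKernel 0 w) • (fun ζ ↦ log |ζ.re|)) 0 1 =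
      log ‖(1 + w ^ 2) / 2‖ := by
  set P : ℂ → ℝ := Complex.re ∘ herglotzRieszKernel 0 w
  have hP : ContinuousOn P (Metric.sphere 0 |1|) :=
    Complex.continuous_re.comp_continuousOn (continuousOn_herglotzRieszKernel_sphere hw)
  have h_log (ρ : ℂ) : CircleIntegrable (P * (log ‖· - ρ‖)) 0 1 :=
    (circleIntegrable_log_norm_sub_const 1).continuousOn_smul hP
  have h_const : CircleIntegrable (P • fun _ ↦ log 2) 0 1 :=
    (circleIntegrable_const _ _ _).continuousOn_smul hP
  have h_split : Set.EqOn (P • fun ζ ↦ log |ζ.re|)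
      (P * (log ‖· - Complex.I‖) + P * (log ‖· - -Complex.I‖) - P • fun _ ↦ log 2)
      (Metric.sphere 0 |1|) := fun ζ hζ ↦ by
    simp only [Pi.smul_apply', Pi.sub_apply, Pi.add_apply, Pi.mul_apply, smul_eq_mul]
    rw [log_abs_re_of_norm_eq_one (by simpa using hζ)]
    ring
  have h_factor : (1 + w ^ 2) / 2 = (w - Complex.I) * (w - -Complex.I) / 2 := by
    linear_combination Complex.I_sq / 2
  have h_ne (ρ : ℂ) (hρ : ‖ρ‖ = 1) : ‖w - ρ‖ ≠ 0 := norm_ne_zero_iff.mpr <| sub_ne_zero.mpr <| by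
    rintro rfl
    exact (mem_ball_zero_iff.mp hw).ne hρ
  have h_I_ne := h_ne Complex.I (by simp)
  have h_neg_I_ne := h_ne (-Complex.I) (by simp)
  rw [circleAverage_congr_sphere h_split,
    circleAverage_sub ((h_log _).add (h_log _)) h_const, circleAverage_add (h_log _) (h_log _),
    circleAverage_re_herglotzRieszKernel_mul_log (by simp) hw,
    circleAverage_re_herglotzRieszKernel_mul_log (by simp) hw,
    (InnerProductSpace.harmonicOnNhd_const _).circleAverage_re_herglotzRieszKernel_smul hw,
    h_factor, norm_div, norm_mul, Complex.norm_ofNat,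
    log_div (mul_ne_zero h_I_ne h_neg_I_ne) two_ne_zero, log_mul h_I_ne h_neg_I_ne]

theorem herglotzTransform_log_abs_re {w : ℂ} (hw : w ∈ Metric.ball 0 1) :
    herglotzTransform (fun ζ ↦ log |ζ.re|) 1 w = Complex.log ((1 + w ^ 2) / 2) := by
  have h_slit : ∀ v ∈ Metric.ball (0 : ℂ) 1, (1 + v ^ 2) / 2 ∈ Complex.slitPlane := fun v hv ↦ by
    have h_sq : ‖v ^ 2‖ < 1 := by
      simpa using pow_lt_one₀ (norm_nonneg v) (mem_ball_zero_iff.mp hv) two_ne_zero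
    have h_norm : ‖(v ^ 2 - 1) / 2‖ < 1 := by
      rw [norm_div, Complex.norm_ofNat, div_lt_one two_pos]
      linarith [norm_sub_le (v ^ 2) 1, norm_one (α := ℂ)]
    convert Complex.mem_slitPlane_of_norm_lt_one h_norm using 1
    ring
  refine herglotzTransform_eq_of_re_eq (F := fun v ↦ Complex.log ((1 + v ^ 2) / 2))
    circleIntegrable_log_abs_re ?_ (fun v hv ↦ ?_) ?_ hw
  · exact DifferentiableOn.clog (by fun_prop) h_slit
  · rw [circleAverage_re_herglotzRieszKernel_smul_log_abs_re hv, Complex.log_re]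
  · have h_half : ((1 + 0 ^ 2) / 2 : ℂ) = ((1 / 2 : ℝ) : ℂ) := by norm_num
    rw [h_half, Complex.log_im, Complex.arg_ofReal_of_nonneg (by norm_num)]

end LogAbsRe

section Arcsine

variable {E : Type*} [NormedAddCommGroup E] [NormedSpace ℝ E]

lemma integral_comp_cos_zero_pi (h : ℝ → E) :
    ∫ θ in 0..π, h (cos θ) = ∫ x in (-1 : ℝ)..1, (√(1 - x ^ 2))⁻¹ • h x := by
  have h_subst := intervalIntegral.integral_deriv_smul_comp_of_deriv_nonpos
    (a := -1) (b := 1) (f := arccos) (f' := fun x ↦ -(1 / √(1 - x ^ 2)))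
    (g := fun θ ↦ h (cos θ)) continuous_arccos.continuousOn
    (fun x hx ↦ by
      rw [min_eq_left (by norm_num), max_eq_right (by norm_num)] at hx
      exact hasDerivAt_arccos hx.1.ne' hx.2.ne)
    (fun x _ ↦ neg_nonpos.mpr (by positivity))
  rw [arccos_neg_one, arccos_one, intervalIntegral.integral_symm 0 π] at h_subst
  rw [← neg_eq_iff_eq_neg.mpr h_subst, ← intervalIntegral.integral_neg]
  refine intervalIntegral.integral_congr fun x hx ↦ ?_
  rw [Set.uIcc_of_le (by norm_num)] at hx
  simp [cos_arccos hx.1 hx.2]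

lemma integral_comp_cos_zero_two_pi {h : ℝ → E}
    (h_int : IntervalIntegrable (fun θ ↦ h (cos θ)) volume 0 (2 * π)) :
    ∫ θ in 0..2 * π, h (cos θ) = (2 : ℝ) • ∫ θ in 0..π, h (cos θ) := by
  have h_mem : π ∈ Set.uIcc 0 (2 * π) := by
    rw [Set.uIcc_of_le two_pi_pos.le]
    constructor <;> linarith [pi_pos]
  have h_reflect : ∫ θ in π..2 * π, h (cos θ) = ∫ θ in 0..π, h (cos θ) := by
    have h_subst :=
      intervalIntegral.integral_comp_sub_left (fun θ ↦ h (cos θ)) (2 * π) (a := 0) (b := π)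
    simp only [cos_two_pi_sub] at h_subst
    rw [h_subst]
    ring_nf
  rw [← intervalIntegral.integral_add_adjacent_intervals
    (h_int.mono_set (Set.uIcc_subset_uIcc_left h_mem))
    (h_int.mono_set (Set.uIcc_subset_uIcc_right h_mem)), h_reflect, two_smul]

theorem circleAverage_comp_re {h : ℝ → E} (h_int : CircleIntegrable (fun ζ ↦ h ζ.re) 0 1) :
    circleAverage (fun ζ ↦ h ζ.re) 0 1 =
      π⁻¹ • ∫ x in (-1 : ℝ)..1, (√(1 - x ^ 2))⁻¹ • h x := by
  have h_re (θ : ℝ) : (circleMap 0 1 θ).re = cos θ := by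
    simp [circleMap_zero, Complex.exp_ofReal_mul_I_re]
  simp only [CircleIntegrable, h_re] at h_int
  simp only [circleAverage_def, h_re]
  rw [integral_comp_cos_zero_two_pi h_int, integral_comp_cos_zero_pi, smul_smul]
  congr 1
  field_simp

end Arcsine

section Joukowsky

lemma herglotzRieszKernel_add_herglotzRieszKernel_inv {s z ζ : ℂ} (hs : s ^ 2 = z ^ 2 - 1)
    (hw : ‖z - s‖ < 1) (hζ : ‖ζ‖ = 1) :
    herglotzRieszKernel 0 (z - s) ζ + herglotzRieszKernel 0 (z - s) ζ⁻¹ =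
      2 * s / (z - ζ.re) := by
  have hζ0 : ζ ≠ 0 := norm_ne_zero_iff.mp (by simp [hζ])
  have h_sub : ζ - (z - s) ≠ 0 := sub_ne_zero.mpr (by rintro rfl; exact hw.ne hζ)
  have h_inv_sub : ζ⁻¹ - (z - s) ≠ 0 :=
    sub_ne_zero.mpr fun h ↦ hw.ne (by rw [← h, norm_inv, hζ, inv_one])
  have hw0 : z - s ≠ 0 := fun h ↦ one_ne_zero (α := ℂ) (by linear_combination (z + s) * h + hs)
  have h_re : (ζ.re : ℂ) = (ζ + ζ⁻¹) / 2 := by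
    rw [Complex.inv_eq_conj hζ, Complex.add_conj]
    push_cast
    ring
  have h_num : (ζ + (z - s)) * (ζ⁻¹ - (z - s)) + (ζ⁻¹ + (z - s)) * (ζ - (z - s)) =
      2 * (z - s) * (2 * s) := by
    linear_combination 2 * mul_inv_cancel₀ hζ0 + 2 * hs
  have h_den : (ζ - (z - s)) * (ζ⁻¹ - (z - s)) = 2 * (z - s) * (z - ζ.re) := by
    rw [h_re]
    linear_combination mul_inv_cancel₀ hζ0 + hs
  simp only [herglotzRieszKernel_def, sub_zero]
  rw [div_add_div _ _ h_sub h_inv_sub, h_den, mul_comm (ζ - _), h_num]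
  exact mul_div_mul_left _ _ (mul_ne_zero two_ne_zero hw0)

lemma re_cpow_inv_two_pos {x : ℂ} (hx : x ∈ Complex.slitPlane) : 0 < (x ^ (2⁻¹ : ℂ)).re := by
  rw [Complex.cpow_inv_two_re]
  have h_pos : 0 < ‖x‖ + x.re := by
    rcases Complex.mem_slitPlane_iff.mp hx with h_re | h_im
    · positivity
    · linarith [Complex.abs_re_lt_norm.mpr h_im, neg_abs_le x.re]
  positivity

lemma one_sub_inv_sq_mem_slitPlane {z : ℂ} (hz : ¬(z.im = 0 ∧ |z.re| ≤ 1)) :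
    1 - z⁻¹ ^ 2 ∈ Complex.slitPlane := by
  contrapose! hz
  set a := z⁻¹
  obtain ⟨h_re, h_im⟩ : 1 ≤ a.re ^ 2 - a.im ^ 2 ∧ a.re * a.im = 0 := by
    simp only [Complex.mem_slitPlane_iff, not_or, not_lt, not_not, pow_two, Complex.sub_re,
      Complex.sub_im, Complex.mul_re, Complex.mul_im, Complex.one_re, Complex.one_im] at hz
    constructor <;> linarith
  have h_re_ne : a.re ≠ 0 := fun h ↦ by nlinarith
  have ha : a = (a.re : ℂ) := Complex.ext rfl ((mul_eq_zero.mp h_im).resolve_left h_re_ne)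
  have hz_real : z = ((a.re)⁻¹ : ℝ) := by rw [Complex.ofReal_inv, ← ha, inv_inv]
  rw [hz_real]
  refine ⟨Complex.ofReal_im _, ?_⟩
  rw [Complex.ofReal_re, abs_inv]
  exact inv_le_one_of_one_le₀ (one_le_sq_iff_one_le_abs _ |>.mp (by nlinarith))

lemma sqBranch_sq {z : ℂ} (hz : z ≠ 0) : sqBranch z ^ 2 = z ^ 2 - 1 := by
  have h_root : ((1 - z⁻¹ ^ 2) ^ ((1 : ℂ) / 2)) ^ 2 = 1 - z⁻¹ ^ 2 := by
    rw [one_div]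
    exact Complex.cpow_ofNat_inv_pow _ 2
  rw [sqBranch, mul_pow, h_root]
  field_simp

lemma sub_sqBranch_mul_add_sqBranch {z : ℂ} (hz : z ≠ 0) :
    (z - sqBranch z) * (z + sqBranch z) = 1 := by
  linear_combination -sqBranch_sq hz

lemma norm_sub_sqBranch_lt_one {z : ℂ} (hz : ¬(z.im = 0 ∧ |z.re| ≤ 1)) :
    ‖z - sqBranch z‖ < 1 := by
  have hz0 : z ≠ 0 := by
    rintro rfl
    simp at hz
  set c : ℂ := (1 - z⁻¹ ^ 2) ^ ((1 : ℂ) / 2) with hc_def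
  have hc : 0 < c.re := by
    rw [hc_def, one_div]
    exact re_cpow_inv_two_pos (one_sub_inv_sq_mem_slitPlane hz)
  have h_norm_lt : ‖1 - c‖ < ‖1 + c‖ := by
    rw [← sq_lt_sq₀ (norm_nonneg _) (norm_nonneg _), Complex.sq_norm, Complex.sq_norm,
      Complex.normSq_sub, Complex.normSq_add]
    simpa using by linarith
  have h_lt : ‖z - sqBranch z‖ < ‖z + sqBranch z‖ := by
    have h_sub : z - sqBranch z = z * (1 - c) := by rw [sqBranch]; ring
    have h_add : z + sqBranch z = z * (1 + c) := by rw [sqBranch]; ring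
    rw [h_sub, h_add, norm_mul, norm_mul]
    exact mul_lt_mul_of_pos_left h_norm_lt (norm_pos_iff.mpr hz0)
  have h_prod : ‖z - sqBranch z‖ * ‖z + sqBranch z‖ = 1 := by
    rw [← norm_mul, sub_sqBranch_mul_add_sqBranch hz0, norm_one]
  by_contra! h_ge
  nlinarith

lemma circleAverage_inv_sub_re_smul {f : ℝ → ℂ} (hf : CircleIntegrable (fun ζ ↦ f ζ.re) 0 1)
    {z : ℂ} (hz : ¬(z.im = 0 ∧ |z.re| ≤ 1)) :
    circleAverage (fun ζ ↦ (z - ζ.re)⁻¹ • f ζ.re) 0 1 =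
      (π : ℂ)⁻¹ * ∫ x in (-1 : ℝ)..1, f x / (√(1 - x ^ 2) * (z - x)) := by
  have h_cauchy : ContinuousOn (fun ζ : ℂ ↦ (z - ζ.re)⁻¹) (Metric.sphere 0 |1|) := by
    refine ContinuousOn.inv₀ (by fun_prop) fun ζ hζ h ↦ hz ?_
    have hζ1 : ‖ζ‖ = 1 := by simpa using hζ
    rw [sub_eq_zero.mp h, Complex.ofReal_im, Complex.ofReal_re]
    exact ⟨rfl, hζ1 ▸ Complex.abs_re_le_norm ζ⟩
  rw [circleAverage_comp_re (h := fun x ↦ (z - x)⁻¹ • f x) (hf.continuousOn_smul h_cauchy),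
    Complex.real_smul, Complex.ofReal_inv]
  congr 2 with x
  rw [Complex.real_smul, smul_eq_mul, Complex.ofReal_inv, div_eq_mul_inv, mul_inv]
  ring

theorem sqBranch_mul_integral_eq_herglotzTransform {f : ℝ → ℝ}
    (hf : CircleIntegrable (fun ζ ↦ f ζ.re) 0 1) {z : ℂ} (hz : ¬(z.im = 0 ∧ |z.re| ≤ 1)) :
    sqBranch z * ∫ x in (-1 : ℝ)..1, (f x : ℂ) / (√(1 - x ^ 2) * (z - x)) =
      π * herglotzTransform (fun ζ ↦ f ζ.re) 1 (z - sqBranch z) := by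
  have hz0 : z ≠ 0 := by
    rintro rfl
    simp at hz
  have hw : z - sqBranch z ∈ Metric.ball 0 1 := mem_ball_zero_iff.mpr (norm_sub_sqBranch_lt_one hz)
  have hf_ofReal : CircleIntegrable (fun ζ ↦ (f ζ.re : ℂ)) 0 1 := ⟨hf.1.ofReal, hf.2.ofReal⟩
  have h_inv : ∀ ζ : ℂ, ‖ζ‖ = 1 → f ζ⁻¹.re = f ζ.re := fun ζ hζ ↦ by
    rw [Complex.inv_eq_conj hζ, Complex.conj_re]
  have h_kernel : Set.EqOn
      (fun ζ ↦ (herglotzRieszKernel 0 (z - sqBranch z) ζ +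
        herglotzRieszKernel 0 (z - sqBranch z) ζ⁻¹) • (f ζ.re : ℂ))
      (fun ζ ↦ (2 * sqBranch z) • ((z - ζ.re)⁻¹ • (f ζ.re : ℂ)))
      (Metric.sphere 0 |1|) := fun ζ hζ ↦ by
    simp only [herglotzRieszKernel_add_herglotzRieszKernel_inv (sqBranch_sq hz0)
      (norm_sub_sqBranch_lt_one hz) (by simpa using hζ), div_eq_mul_inv, mul_smul]
  have h_symm := two_mul_herglotzTransform_of_comp_inv (g := fun ζ ↦ f ζ.re) hf h_inv hw
  rw [circleAverage_congr_sphere h_kernel, circleAverage_fun_smul,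
    circleAverage_inv_sub_re_smul (f := fun x ↦ (f x : ℂ)) hf_ofReal hz, smul_eq_mul] at h_symm
  have hπ : (π : ℂ) ≠ 0 := Complex.ofReal_ne_zero.mpr pi_ne_zero
  linear_combination (-π / 2) * h_symm - sqBranch z *
    (∫ x in (-1 : ℝ)..1, (f x : ℂ) / (√(1 - x ^ 2) * (z - x))) * mul_inv_cancel₀ hπ

end Joukowsky

theorem szego_abs_pow_general (α z : ℂ) (hz : ¬(z.im = 0 ∧ |z.re| ≤ 1)) :
    sqBranch z / (2 * π) *
        ∫ x in (-1 : ℝ)..1, (α * Real.log |x|) / ((Real.sqrt (1 - x ^ 2) : ℂ) * (z - x)) =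
      (α / 2 : ℂ) * Complex.log (z / (z + sqBranch z)) := by
  have hz0 : z ≠ 0 := by
    rintro rfl
    simp at hz
  have hπ : (π : ℂ) ≠ 0 := Complex.ofReal_ne_zero.mpr pi_ne_zero
  have h_conj := sub_sqBranch_mul_add_sqBranch hz0
  have h_joukowsky : (1 + (z - sqBranch z) ^ 2) / 2 = z / (z + sqBranch z) := by
    rw [div_eq_div_iff two_ne_zero (right_ne_zero_of_mul_eq_one h_conj)]
    linear_combination (z - sqBranch z) * h_conj
  have h_integral := sqBranch_mul_integral_eq_herglotzTransform (f := fun x ↦ log |x|)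
    circleIntegrable_log_abs_re hz
  rw [herglotzTransform_log_abs_re (mem_ball_zero_iff.mpr (norm_sub_sqBranch_lt_one hz)),
    h_joukowsky] at h_integral
  simp only [mul_div_assoc, intervalIntegral.integral_const_mul]
  calc _ = α / (2 * π) * (sqBranch z * ∫ x in (-1 : ℝ)..1,
        (log |x| : ℂ) / (√(1 - x ^ 2) * (z - x))) := by ring
    _ = α / 2 * Complex.log (z / (z + sqBranch z)) := by
      rw [h_integral]
      field_simp

/-- **Lemma (the Szegő function of the weight `|x|^α`).**
For every real `α > -1` and every `z ∈ ℂ∖[-1,1]`: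
`exp(((z²-1)^{1/2}/(2π)) ∫_{-1}^1 α log|x| / (√(1-x²)(z-x)) dx)
  = exp((α/2) Log(z/(z+(z²-1)^{1/2})))` with the principal logarithm. -/
theorem szego_abs_pow (α : ℝ) (hα : -1 < α) (z : ℂ) (hz : ¬(z.im = 0 ∧ |z.re| ≤ 1)) :
    Complex.exp (sqBranch z / (2 * π) *
        ∫ x in (-1 : ℝ)..1,
          ((α * Real.log |x| : ℝ) : ℂ) / ((Real.sqrt (1 - x ^ 2) : ℂ) * (z - x))) =
      Complex.exp ((α / 2 : ℂ) * Complex.log (z / (z + sqBranch z))) := by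
  simp only [Complex.ofReal_mul]
  rw [szego_abs_pow_general α z hz]
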